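/- Let 0 < α ≤ 1. If φ is a real-valued, non-constant, 2π-periodic function of class C^{1,α}(𝕋) (i.e., φ is C¹ and φ′ satisfies a Lipschitz condition of order α), then for every p with 1 ≤ p < 1+α there is a constant c_p > 0 such that ‖e^{iλφ}‖_{A_p(𝕋)} ≥ c_p · |λ|^{1/p − 1/(1+α)} for all λ ∈ ℝ. In particular ‖e^{iλφ}‖_{A_1(𝕋)} ≥ c · |λ|^{α/(1+α)}. -/

import Mathlib

open MeasureTheory Real Set
open scoped ENNReal

/-- The k-th Fourier coefficient of a (2π-periodic) function on the circle,
identified with a function on [0, 2π]. -/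
noncomputable def fourierCoef (f : ℝ → ℂ) (k : ℤ) : ℂ :=
  (1 / (2 * (Real.pi : ℂ))) *
    ∫ t in (0:ℝ)..(2 * Real.pi), f t * Complex.exp (-Complex.I * (k : ℂ) * (t : ℂ))

/-- The A_p(𝕋) norm: ℓ^p norm of the sequence of Fourier coefficients
(valued in ℝ≥0∞ so that divergence gives ∞). -/
noncomputable def ApNorm (p : ℝ) (f : ℝ → ℂ) : ℝ≥0∞ :=
  (∑' k : ℤ, ((‖fourierCoef f k‖₊ : ℝ≥0∞) ^ p)) ^ (1 / p)

open scoped NNReal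

/-!
By Young's inequality, convolution with a sequence of `ℓ¹` norm one does not increase the `ℓ^p`
norm. Apply this to the absolute values of the Fourier coefficients of `e^{iλφ}` and to the
coefficients of a triangle function `tent δ`, which are nonnegative and hence sum to its value `1`
at the origin. The `k`-th entry of the convolution bounds the integral of `e^{-ikt} e^{iλφ(t)}`
against the triangle centred at any point `τ`, because a translation only multiplies Fourier
coefficients by unimodular numbers.

If `λ φ'(τ) = k`, the linear part of the phase at `τ` cancels, and by the Hölder condition what
remains is `O(|λ| δ^{1+α})`. For a suitable `δ ≍ |λ|^{-1/(1+α)}` nothing oscillates on the triangle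
and the integral is `≳ δ`. Since `φ'` vanishes somewhere, is not identically zero and has the
Darboux property, this applies to `≳ |λ|` integers `k`, whence
`‖e^{iλφ}‖_{A_p} ≳ |λ|^{1/p} δ ≍ |λ|^{1/p - 1/(1+α)}`.
-/

section Young

variable {ι G : Type*} {p : ℝ}

theorem tsum_mul_rpow_le (hp : 1 ≤ p) (w x : ι → ℝ≥0∞) :
    (∑' i, w i * x i) ^ p ≤ (∑' i, w i) ^ (p - 1) * ∑' i, w i * x i ^ p := by
  have hp0 : 0 < p := zero_lt_one.trans_le hp
  have hholder : ∑' i, w i * x i ≤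
      (∑' i, w i) ^ (1 - p⁻¹) * (∑' i, w i * x i ^ p) ^ p⁻¹ := by
    rw [ENNReal.tsum_eq_iSup_sum]
    refine iSup_le fun s ↦ (ENNReal.inner_le_weight_mul_Lp_of_nonneg s hp w x).trans ?_
    gcongr
    · exact sub_nonneg.2 (inv_le_one_of_one_le₀ hp)
    · exact ENNReal.sum_le_tsum s
    · exact ENNReal.sum_le_tsum s
  calc (∑' i, w i * x i) ^ p
      ≤ ((∑' i, w i) ^ (1 - p⁻¹) * (∑' i, w i * x i ^ p) ^ p⁻¹) ^ p := by gcongr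
    _ = (∑' i, w i) ^ (p - 1) * ∑' i, w i * x i ^ p := by
      rw [ENNReal.mul_rpow_of_nonneg _ _ hp0.le, ENNReal.rpow_inv_rpow hp0.ne', ← ENNReal.rpow_mul,
        sub_mul, one_mul, inv_mul_cancel₀ hp0.ne']

theorem tsum_rpow_tsum_mul_sub_le [AddGroup G] (hp : 1 ≤ p) (w x : G → ℝ≥0∞) :
    ∑' k, (∑' m, w m * x (k - m)) ^ p ≤ (∑' m, w m) ^ p * ∑' k, x k ^ p :=
  calc ∑' k, (∑' m, w m * x (k - m)) ^ p
      ≤ ∑' k, (∑' m, w m) ^ (p - 1) * ∑' m, w m * x (k - m) ^ p :=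
        ENNReal.tsum_le_tsum fun k ↦ tsum_mul_rpow_le hp w fun m ↦ x (k - m)
    _ = (∑' m, w m) ^ (p - 1) * ∑' m, w m * ∑' k, x (k - m) ^ p := by
        simp only [ENNReal.tsum_mul_left]
        rw [ENNReal.tsum_comm]
        simp only [ENNReal.tsum_mul_left]
    _ = (∑' m, w m) ^ (p - 1) * ((∑' m, w m) ^ (1 : ℝ) * ∑' k, x k ^ p) := by
        simp only [fun m ↦ (Equiv.subRight m).tsum_eq fun k ↦ x k ^ p, ENNReal.tsum_mul_right,
          ENNReal.rpow_one, ← Equiv.subRight_apply]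
    _ = (∑' m, w m) ^ p * ∑' k, x k ^ p := by
        rw [← mul_assoc, ← ENNReal.rpow_add_of_nonneg _ _ (sub_nonneg.2 hp) zero_le_one,
          sub_add_cancel]

end Young

theorem sub_mul_integral_le_norm_integral_smul {X E : Type*} [MeasurableSpace X] {μ : Measure X}
    [NormedAddCommGroup E] [NormedSpace ℝ E] [CompleteSpace E] {g : X → ℝ} {f : X → E} {z : E}
    {ε : ℝ} (hg0 : 0 ≤ g) (hg : Integrable g μ) (hgf : Integrable (fun x ↦ g x • f x) μ)
    (hf : ∀ x, g x ≠ 0 → ‖f x - z‖ ≤ ε) :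
    (‖z‖ - ε) * ∫ x, g x ∂μ ≤ ‖∫ x, g x • f x ∂μ‖ := by
  have hgz : Integrable (fun x ↦ g x • z) μ := hg.smul_const z
  have herror : ‖∫ x, g x • z ∂μ - ∫ x, g x • f x ∂μ‖ ≤ ε * ∫ x, g x ∂μ := by
    rw [← integral_sub hgz hgf, ← integral_const_mul]
    refine norm_integral_le_of_norm_le (hg.const_mul ε) (.of_forall fun x ↦ ?_)
    rw [← smul_sub, norm_smul, Real.norm_of_nonneg (hg0 x), norm_sub_rev, mul_comm]
    rcases eq_or_ne (g x) 0 with hx | hx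
    · simp [hx]
    · exact mul_le_mul_of_nonneg_right (hf x hx) (hg0 x)
  have hmain : ‖∫ x, g x • z ∂μ‖ = ‖z‖ * ∫ x, g x ∂μ := by
    rw [integral_smul_const, norm_smul, Real.norm_of_nonneg (integral_nonneg hg0), mul_comm]
  have htri := norm_sub_norm_le (∫ x, g x • z ∂μ) (∫ x, g x • f x ∂μ)
  linarith

theorem holderWith_of_dist_le {X Y : Type*} [PseudoMetricSpace X] [PseudoMetricSpace Y]
    {C r : ℝ≥0} {f : X → Y} (h : ∀ x y, dist (f x) (f y) ≤ C * dist x y ^ (r : ℝ)) :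
    HolderWith C r f := fun x y ↦ by
  rw [edist_nndist, edist_nndist, ← ENNReal.coe_rpow_of_nonneg _ r.coe_nonneg, ← ENNReal.coe_mul,
    ENNReal.coe_le_coe]
  exact h x y

theorem norm_sub_sub_smul_deriv_le_of_holderWith {E : Type*} [NormedAddCommGroup E]
    [NormedSpace ℝ E] {f : ℝ → E} {C r : ℝ≥0} (hf : Differentiable ℝ f)
    (hholder : HolderWith C r (deriv f)) (x y : ℝ) :
    ‖f y - f x - (y - x) • deriv f x‖ ≤ C * |y - x| ^ (1 + r : ℝ) := by
  have hderiv (t : ℝ) :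
      HasDerivAt (fun t ↦ f t - t • deriv f x) (deriv f t - (1 : ℝ) • deriv f x) t :=
    (hf t).hasDerivAt.sub ((hasDerivAt_id t).smul_const _)
  have hbound (t : ℝ) (ht : t ∈ uIcc x y) :
      ‖deriv f t - (1 : ℝ) • deriv f x‖ ≤ C * |y - x| ^ (r : ℝ) := by
    rw [one_smul, ← dist_eq_norm]
    exact hholder.dist_le_of_le (abs_sub_left_of_mem_uIcc ht)
  have hmean := (convex_uIcc x y).norm_image_sub_le_of_norm_hasDerivWithin_le
    (fun t _ ↦ (hderiv t).hasDerivWithinAt) hbound left_mem_uIcc right_mem_uIcc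
  calc ‖f y - f x - (y - x) • deriv f x‖
      = ‖f y - y • deriv f x - (f x - x • deriv f x)‖ := by rw [sub_smul]; abel_nf
    _ ≤ C * |y - x| ^ (r : ℝ) * |y - x| := hmean
    _ = C * |y - x| ^ (1 + r : ℝ) := by
      rw [add_comm, rpow_add_one' (abs_nonneg _) (by positivity), mul_assoc]

theorem exists_finset_int_subset_uIcc_zero (y : ℝ) :
    ∃ S : Finset ℤ, (∀ k ∈ S, (k : ℝ) ∈ uIcc 0 y) ∧ 1 ≤ (S.card : ℝ) ∧ |y| ≤ S.card := by
  refine ⟨Finset.Icc ⌈min 0 y⌉ ⌊max 0 y⌋, fun k hk ↦ ?_, ?_, ?_⟩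
  · rw [Finset.mem_Icc, Int.ceil_le, Int.le_floor] at hk
    exact hk
  · exact_mod_cast Finset.one_le_card.2 ⟨0, by simp [Int.ceil_le, Int.le_floor]⟩
  · have hcard : (⌊max 0 y⌋ + 1 - ⌈min 0 y⌉ : ℝ) ≤ (Finset.Icc ⌈min 0 y⌉ ⌊max 0 y⌋).card := by
      rw [Int.card_Icc]
      exact_mod_cast Int.self_le_toNat _
    refine le_trans ?_ hcard
    rcases le_total 0 y with hy | hy
    · simpa [hy, abs_of_nonneg hy] using (Int.lt_floor_add_one y).le
    · have := Int.ceil_lt_add_one y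
      simp only [max_eq_left hy, min_eq_right hy, abs_of_nonpos hy, Int.floor_zero, Int.cast_zero]
      linarith

section Fourier

open AddCircle

theorem exists_coe_eq_and_abs_eq_norm {T : ℝ} (u : AddCircle T) :
    ∃ x : ℝ, (x : AddCircle T) = u ∧ |x| = ‖u‖ := by
  induction u using QuotientAddGroup.induction_on with
  | H x =>
    refine ⟨x - round (T⁻¹ * x) * T, ?_, (AddCircle.norm_eq T).symm⟩
    rw [← zsmul_eq_mul, AddCircle.coe_sub, AddCircle.coe_zsmul, AddCircle.coe_period, smul_zero,
      sub_zero]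

variable {T : ℝ} [Fact (0 < T)] {E : Type*} [NormedAddCommGroup E] [NormedSpace ℂ E]

theorem fourierCoeff_comp_add_right (f : AddCircle T → E) (τ : AddCircle T) (n : ℤ) :
    fourierCoeff (fun x ↦ f (x + τ)) n = fourier n τ • fourierCoeff f n := by
  have hchar (x : AddCircle T) :
      (fourier (-n) x : ℂ) = fourier n τ * fourier (-n) (x + τ) := by
    simp only [fourier_apply, ← Circle.coe_mul, ← toCircle_add]
    congr 2
    simp only [neg_smul, smul_add]
    abel
  calc fourierCoeff (fun x ↦ f (x + τ)) n
      = ∫ x, (fourier n τ : ℂ) • (fourier (-n) (x + τ) : ℂ) • f (x + τ) ∂haarAddCircle :=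
        integral_congr_ae (.of_forall fun x ↦ by simp only [hchar x, mul_smul])
    _ = (fourier n τ : ℂ) • fourierCoeff f n := by
        rw [integral_smul, integral_add_right_eq_self fun x ↦ (fourier (-n) x : ℂ) • f x,
          fourierCoeff]

theorem fourierCoeff_fourier_smul (f : AddCircle T → E) (k n : ℤ) :
    fourierCoeff (fun x ↦ (fourier k x : ℂ) • f x) n = fourierCoeff f (n - k) := by
  simp only [fourierCoeff, smul_smul, ← fourier_add, neg_sub, neg_add_eq_sub]

theorem hasSum_integral_smul_of_summable_fourierCoeff {g : AddCircle T → ℂ}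
    (hg : Continuous g) (hg_sum : Summable (fourierCoeff g)) {f : AddCircle T → E}
    (hf : Integrable f haarAddCircle) :
    HasSum (fun m ↦ fourierCoeff g m • fourierCoeff f (-m)) (∫ x, g x • f x ∂haarAddCircle) := by
  have hterm (m : ℤ) : ∫ x, fourierCoeff g m • (fourier m x : ℂ) • f x ∂haarAddCircle =
      fourierCoeff g m • fourierCoeff f (-m) := by
    rw [integral_smul, fourierCoeff.eq_def f, neg_neg]
  have hnorm (m : ℤ) : ∫ x, ‖fourierCoeff g m • (fourier m x : ℂ) • f x‖ ∂haarAddCircle =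
      ‖fourierCoeff g m‖ * ∫ x, ‖f x‖ ∂haarAddCircle := by
    simp only [norm_smul, fourier_apply, Circle.norm_coe, one_mul, integral_const_mul]
  have hseries (x : AddCircle T) :
      ∑' m, fourierCoeff g m • (fourier m x : ℂ) • f x = g x • f x := by
    simpa only [smul_assoc, ContinuousMap.coe_mk] using
      ((has_pointwise_sum_fourier_series_of_summable (f := ⟨g, hg⟩) hg_sum x).smul_const
        (f x)).tsum_eq
  have hsum := hasSum_integral_of_summable_integral_norm
    (F := fun m x ↦ fourierCoeff g m • (fourier m x : ℂ) • f x)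
    (fun m ↦ (hf.fourier_smul m).smul (fourierCoeff g m))
    (by simpa only [hnorm] using hg_sum.norm.mul_right _)
  simpa only [hterm, hseries] using hsum

theorem enorm_integral_smul_le_tsum_fourierCoeff {g : AddCircle T → ℂ} (hg : Continuous g)
    (hg_sum : Summable (fourierCoeff g)) {f : AddCircle T → E} (hf : Integrable f haarAddCircle) :
    ‖∫ x, g x • f x ∂haarAddCircle‖ₑ ≤ ∑' m, ‖fourierCoeff g m‖ₑ * ‖fourierCoeff f (-m)‖ₑ := by
  rw [← (hasSum_integral_smul_of_summable_fourierCoeff hg hg_sum hf).tsum_eq]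
  simpa only [enorm_smul] using
    enorm_tsum_le_tsum_enorm (f := fun m ↦ fourierCoeff g m • fourierCoeff f (-m))

theorem fourierCoeff_ofReal_of_even {f : AddCircle T → ℝ} (hf : Continuous f) (heven : f.Even)
    (n : ℤ) : fourierCoeff (fun x ↦ (f x : ℂ)) n =
      ((2 / T * ∫ x in (0 : ℝ)..T / 2, cos (2 * π * n / T * x) * f x : ℝ) : ℂ) := by
  set h : ℝ → ℂ := fun x ↦ (fourier (-n) (x : AddCircle T) : ℂ) • (f x : ℂ) with hh
  have hcont : Continuous h :=
    (by fun_prop : Continuous fun x : AddCircle T ↦ (fourier (-n) x : ℂ) • (f x : ℂ)).comp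
      (AddCircle.continuous_mk' T)
  have hint (a b : ℝ) : IntervalIntegrable h volume a b := hcont.intervalIntegrable a b
  have hint_neg (a b : ℝ) : IntervalIntegrable (fun x ↦ h (-x)) volume a b :=
    (hcont.comp continuous_neg).intervalIntegrable a b
  have hcos (x : ℝ) : h (-x) + h x = ((2 * (cos (2 * π * n / T * x) * f x) : ℝ) : ℂ) := by
    simp only [hh, fourier_coe_apply, coe_neg, heven (x : AddCircle T), smul_eq_mul]
    push_cast
    rw [Complex.cos]
    ring_nf
  rw [fourierCoeff_eq_intervalIntegral _ n (-(T / 2)), show -(T / 2) + T = T / 2 by ring,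
    ← intervalIntegral.integral_add_adjacent_intervals (hint _ 0) (hint _ _),
    ← neg_zero, ← intervalIntegral.integral_comp_neg, neg_zero,
    ← intervalIntegral.integral_add (hint_neg _ _) (hint _ _)]
  simp only [hcos, intervalIntegral.integral_ofReal, intervalIntegral.integral_const_mul]
  rw [Complex.real_smul]
  push_cast
  ring

end Fourier

/-- The radial hat function of height `1` and radius `δ`, supported in the ball `‖x‖ ≤ δ`. On the
circle it serves as a localising factor whose Fourier coefficients are nonnegative. -/
noncomputable def tent {E : Type*} [Norm E] (δ : ℝ) (x : E) : ℝ :=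
  max 0 (1 - ‖x‖ / δ)

section Tent

variable {E : Type*} [SeminormedAddGroup E] {δ : ℝ}

theorem tent_nonneg : 0 ≤ (tent δ : E → ℝ) := fun _ ↦ le_max_left _ _

theorem tent_zero : tent δ (0 : E) = 1 := by simp [tent]

theorem tent_le_one (hδ : 0 ≤ δ) (x : E) : tent δ x ≤ 1 :=
  max_le zero_le_one <| sub_le_self 1 <| div_nonneg (norm_nonneg x) hδ

theorem even_tent : (tent δ : E → ℝ).Even := fun x ↦ by simp only [tent, norm_neg]

theorem continuous_tent : Continuous (tent δ : E → ℝ) := by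
  unfold tent
  fun_prop

theorem tent_of_norm_le (hδ : 0 < δ) {x : E} (hx : ‖x‖ ≤ δ) : tent δ x = 1 - ‖x‖ / δ :=
  max_eq_right <| sub_nonneg.2 <| (div_le_one hδ).2 hx

theorem tent_of_le_norm (hδ : 0 < δ) {x : E} (hx : δ ≤ ‖x‖) : tent δ x = 0 :=
  max_eq_left <| sub_nonpos.2 <| (one_le_div hδ).2 hx

end Tent

theorem integral_cos_mul_one_sub_div {ω δ : ℝ} (hω : ω ≠ 0) (hδ : δ ≠ 0) :
    ∫ x in (0 : ℝ)..δ, cos (ω * x) * (1 - x / δ) = (1 - cos (ω * δ)) / (δ * ω ^ 2) := by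
  have hderiv (x : ℝ) : HasDerivAt
      (fun x ↦ (1 - x / δ) * (sin (ω * x) / ω) - cos (ω * x) / (δ * ω ^ 2))
      (cos (ω * x) * (1 - x / δ)) x := by
    have hlin : HasDerivAt (fun x ↦ ω * x) ω x := by
      simpa only [mul_one] using (hasDerivAt_id' x).const_mul ω
    refine ((((hasDerivAt_id' x).div_const δ).const_sub 1).mul (hlin.sin.div_const ω)).sub
      (hlin.cos.div_const (δ * ω ^ 2)) |>.congr_deriv ?_
    field_simp
    ring
  rw [intervalIntegral.integral_eq_sub_of_hasDerivAt (fun x _ ↦ hderiv x)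
    (Continuous.intervalIntegrable (by fun_prop) _ _)]
  simp only [div_self hδ, mul_zero, cos_zero, sin_zero]
  ring

theorem integral_one_sub_div {δ : ℝ} (hδ : δ ≠ 0) :
    ∫ x in (0 : ℝ)..δ, (1 - x / δ) = δ / 2 := by
  rw [intervalIntegral.integral_sub (by simp) (by simp), intervalIntegral.integral_div]
  simp only [intervalIntegral.integral_const, integral_id, smul_eq_mul]
  field_simp
  ring

section CircleTent

open AddCircle

variable {T δ : ℝ} [hT : Fact (0 < T)]

theorem integral_cos_mul_tent (hδ : 0 < δ) (hδT : δ ≤ T / 2) (ω : ℝ) :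
    ∫ x in (0 : ℝ)..T / 2, cos (ω * x) * tent δ (x : AddCircle T) =
      ∫ x in (0 : ℝ)..δ, cos (ω * x) * (1 - x / δ) := by
  have hnorm {x : ℝ} (hx0 : 0 ≤ x) (hx : x ≤ T / 2) : ‖(x : AddCircle T)‖ = x := by
    rw [(norm_coe_eq_abs_iff T hT.out.ne').2, abs_of_nonneg hx0]
    rwa [abs_of_nonneg hx0, abs_of_pos hT.out]
  have hint (a b : ℝ) :
      IntervalIntegrable (fun x : ℝ ↦ cos (ω * x) * tent δ (x : AddCircle T)) volume a b :=
    Continuous.intervalIntegrable ((by fun_prop : Continuous fun x ↦ cos (ω * x)).mul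
      (continuous_tent.comp (AddCircle.continuous_mk' T))) a b
  have houter : ∫ x in δ..T / 2, cos (ω * x) * tent δ (x : AddCircle T) = 0 := by
    refine intervalIntegral.integral_zero_ae (.of_forall fun x hx ↦ ?_)
    rw [uIoc_of_le hδT] at hx
    rw [tent_of_le_norm hδ (by rw [hnorm (hδ.trans hx.1).le hx.2]; exact hx.1.le), mul_zero]
  rw [← intervalIntegral.integral_add_adjacent_intervals (hint 0 δ) (hint δ _), houter, add_zero]
  refine intervalIntegral.integral_congr fun x hx ↦ ?_
  rw [uIcc_of_le hδ.le] at hx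
  have hx_norm := hnorm hx.1 (hx.2.trans hδT)
  simp only [tent_of_norm_le hδ (hx_norm.trans_le hx.2), hx_norm]

theorem fourierCoeff_tent_zero (hδ : 0 < δ) (hδT : δ ≤ T / 2) :
    fourierCoeff (fun x : AddCircle T ↦ (tent δ x : ℂ)) 0 = ((δ / T : ℝ) : ℂ) := by
  rw [fourierCoeff_ofReal_of_even continuous_tent even_tent, integral_cos_mul_tent hδ hδT]
  simp only [Int.cast_zero, mul_zero, zero_div, zero_mul, cos_zero, one_mul,
    integral_one_sub_div hδ.ne']
  congr 1
  ring

theorem fourierCoeff_tent (hδ : 0 < δ) (hδT : δ ≤ T / 2) {n : ℤ} (hn : n ≠ 0) :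
    fourierCoeff (fun x : AddCircle T ↦ (tent δ x : ℂ)) n =
      ((T / (2 * π ^ 2 * δ) * ((1 - cos (2 * π * n / T * δ)) / n ^ 2) : ℝ) : ℂ) := by
  have hT0 : T ≠ 0 := hT.out.ne'
  have hn' : (n : ℝ) ≠ 0 := Int.cast_ne_zero.2 hn
  have hω : 2 * π * n / T ≠ 0 := by positivity
  rw [fourierCoeff_ofReal_of_even continuous_tent even_tent, integral_cos_mul_tent hδ hδT,
    integral_cos_mul_one_sub_div hω hδ.ne']
  congr 1
  field_simp

theorem coe_norm_fourierCoeff_tent (hδ : 0 < δ) (hδT : δ ≤ T / 2) (n : ℤ) :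
    (‖fourierCoeff (fun x : AddCircle T ↦ (tent δ x : ℂ)) n‖ : ℂ) =
      fourierCoeff (fun x : AddCircle T ↦ (tent δ x : ℂ)) n := by
  have hT0 : 0 < T := hT.out
  rcases eq_or_ne n 0 with rfl | hn
  · rw [fourierCoeff_tent_zero hδ hδT, Complex.norm_of_nonneg (by positivity)]
  · have hcos := sub_nonneg.2 (cos_le_one (2 * π * n / T * δ))
    rw [fourierCoeff_tent hδ hδT hn, Complex.norm_of_nonneg (by positivity)]

theorem summable_fourierCoeff_tent (hδ : 0 < δ) (hδT : δ ≤ T / 2) :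
    Summable (fourierCoeff fun x : AddCircle T ↦ (tent δ x : ℂ)) := by
  have hT0 : 0 < T := hT.out
  refine Summable.of_norm_bounded_eventually
    ((Real.summable_one_div_int_pow.2 one_lt_two).mul_left (T / (π ^ 2 * δ))) ?_
  filter_upwards [(finite_singleton (0 : ℤ)).compl_mem_cofinite] with n hn
  have hcos := neg_one_le_cos (2 * π * n / T * δ)
  have hcos' := sub_nonneg.2 (cos_le_one (2 * π * n / T * δ))
  rw [fourierCoeff_tent hδ hδT hn, Complex.norm_of_nonneg (by positivity)]
  calc T / (2 * π ^ 2 * δ) * ((1 - cos (2 * π * n / T * δ)) / n ^ 2)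
      ≤ T / (2 * π ^ 2 * δ) * (2 / n ^ 2) := by gcongr; linarith
    _ = T / (π ^ 2 * δ) * (1 / n ^ 2) := by field_simp

theorem tsum_enorm_fourierCoeff_tent (hδ : 0 < δ) (hδT : δ ≤ T / 2) :
    ∑' n, ‖fourierCoeff (fun x : AddCircle T ↦ (tent δ x : ℂ)) n‖ₑ = 1 := by
  have hsum := summable_fourierCoeff_tent hδ hδT
  have hvalue := (has_pointwise_sum_fourier_series_of_summable
    (f := ⟨fun x ↦ (tent δ x : ℂ), Complex.continuous_ofReal.comp continuous_tent⟩) hsum 0).tsum_eq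
  simp only [ContinuousMap.coe_mk, fourier_eval_zero, smul_eq_mul, mul_one, tent_zero,
    Complex.ofReal_one] at hvalue
  have hnorm : ∑' n, ‖fourierCoeff (fun x : AddCircle T ↦ (tent δ x : ℂ)) n‖ = 1 := by
    rw [← Complex.ofReal_inj, Complex.ofReal_tsum, Complex.ofReal_one, ← hvalue]
    simp only [coe_norm_fourierCoeff_tent hδ hδT]
  simp only [← ofReal_norm]
  rw [← ENNReal.ofReal_tsum_of_nonneg (fun _ ↦ norm_nonneg _) hsum.norm, hnorm, ENNReal.ofReal_one]

theorem integral_tent (hδ : 0 < δ) (hδT : δ ≤ T / 2) :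
    ∫ x : AddCircle T, tent δ x ∂haarAddCircle = δ / T := by
  have h := fourierCoeff_tent_zero hδ hδT
  simp only [fourierCoeff, neg_zero, fourier_zero, one_smul, integral_complex_ofReal] at h
  exact_mod_cast h

end CircleTent

section Localization

open AddCircle

variable {T δ : ℝ} [Fact (0 < T)] {E : Type*} [NormedAddCommGroup E] [NormedSpace ℂ E]

theorem integrable_tent_smul {f : AddCircle T → E} (hf : Integrable f haarAddCircle) (hδ : 0 ≤ δ) :
    Integrable (fun u ↦ tent δ u • f u) haarAddCircle := by
  have hbound (u : AddCircle T) : ‖(tent δ u : ℂ)‖ ≤ 1 := by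
    rw [Complex.norm_of_nonneg (tent_nonneg u)]
    exact tent_le_one hδ u
  simp only [← Complex.coe_smul]
  exact hf.bdd_smul (φ := fun u ↦ (tent δ u : ℂ)) 1
    (Complex.continuous_ofReal.comp continuous_tent).aestronglyMeasurable (.of_forall hbound)

variable [CompleteSpace E] {F : AddCircle T → E}

theorem le_tsum_enorm_fourierCoeff_of_norm_sub_le (hF : Integrable F haarAddCircle)
    (hδ : 0 < δ) (hδT : δ ≤ T / 2) {k : ℤ} {τ : AddCircle T} {z : E} (hz : ‖z‖ = 1)
    (hloc : ∀ u, ‖u‖ ≤ δ → ‖(fourier (-k) u : ℂ) • F (u + τ) - z‖ ≤ 1 / 2) :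
    ENNReal.ofReal (δ / (2 * T)) ≤
      ∑' m, ‖fourierCoeff (fun x : AddCircle T ↦ (tent δ x : ℂ)) m‖ₑ *
        ‖fourierCoeff F (k - m)‖ₑ := by
  set f : AddCircle T → E := fun u ↦ (fourier (-k) u : ℂ) • F (u + τ)
  have hf : Integrable f haarAddCircle := (hF.comp_add_right τ).fourier_smul _
  have hcoeff (m : ℤ) : ‖fourierCoeff f (-m)‖ₑ = ‖fourierCoeff F (k - m)‖ₑ := by
    rw [fourierCoeff_fourier_smul (fun u ↦ F (u + τ)), fourierCoeff_comp_add_right, enorm_smul,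
      fourier_apply, ← ofReal_norm (toCircle _ : ℂ), Circle.norm_coe, ENNReal.ofReal_one, one_mul,
      sub_neg_eq_add, neg_add_eq_sub]
  have hlower : δ / (2 * T) ≤ ‖∫ u, tent δ u • f u ∂haarAddCircle‖ := by
    have h := sub_mul_integral_le_norm_integral_smul (ε := 1 / 2) tent_nonneg
      (continuous_tent.integrable_of_hasCompactSupport (.of_compactSpace _))
      (integrable_tent_smul hf hδ.le)
      fun u hu ↦ hloc u (le_of_not_ge fun hδu ↦ hu (tent_of_le_norm hδ hδu))
    rw [hz, integral_tent hδ hδT] at h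
    refine le_trans (le_of_eq ?_) h
    ring
  calc ENNReal.ofReal (δ / (2 * T)) ≤ ‖∫ u, (tent δ u : ℂ) • f u ∂haarAddCircle‖ₑ := by
        simpa only [Complex.coe_smul, ofReal_norm] using ENNReal.ofReal_le_ofReal hlower
    _ ≤ _ := by
        simpa only [hcoeff] using enorm_integral_smul_le_tsum_fourierCoeff
          (g := fun u ↦ (tent δ u : ℂ)) (Complex.continuous_ofReal.comp continuous_tent)
          (summable_fourierCoeff_tent hδ hδT) hf

theorem card_mul_rpow_le_tsum_fourierCoeff (hF : Integrable F haarAddCircle) (hδ : 0 < δ)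
    (hδT : δ ≤ T / 2) {p : ℝ} (hp : 1 ≤ p) {S : Finset ℤ}
    (hS : ∀ k ∈ S, ∃ (τ : AddCircle T) (z : E), ‖z‖ = 1 ∧
      ∀ u, ‖u‖ ≤ δ → ‖(fourier (-k) u : ℂ) • F (u + τ) - z‖ ≤ 1 / 2) :
    S.card * ENNReal.ofReal (δ / (2 * T)) ^ p ≤ ∑' k, ‖fourierCoeff F k‖ₑ ^ p := by
  set w : ℤ → ℝ≥0∞ := fun m ↦ ‖fourierCoeff (fun x : AddCircle T ↦ (tent δ x : ℂ)) m‖ₑ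
  calc S.card * ENNReal.ofReal (δ / (2 * T)) ^ p
      = ∑ _ ∈ S, ENNReal.ofReal (δ / (2 * T)) ^ p := by rw [Finset.sum_const, nsmul_eq_mul]
    _ ≤ ∑ k ∈ S, (∑' m, w m * ‖fourierCoeff F (k - m)‖ₑ) ^ p := by
        refine Finset.sum_le_sum fun k hk ↦ ?_
        obtain ⟨τ, z, hz, hloc⟩ := hS k hk
        gcongr
        exact le_tsum_enorm_fourierCoeff_of_norm_sub_le hF hδ hδT hz hloc
    _ ≤ ∑' k, (∑' m, w m * ‖fourierCoeff F (k - m)‖ₑ) ^ p := ENNReal.sum_le_tsum S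
    _ ≤ (∑' m, w m) ^ p * ∑' k, ‖fourierCoeff F k‖ₑ ^ p :=
        tsum_rpow_tsum_mul_sub_le hp w fun k ↦ ‖fourierCoeff F k‖ₑ
    _ = ∑' k, ‖fourierCoeff F k‖ₑ ^ p := by
        rw [tsum_enorm_fourierCoeff_tent hδ hδT, ENNReal.one_rpow, one_mul]

end Localization

section Phase

local instance : Fact (0 < 2 * π) := ⟨two_pi_pos⟩

variable {φ : ℝ → ℝ} {C r : ℝ≥0}

theorem norm_fourier_neg_mul_exp_sub_le (hφ : Differentiable ℝ φ)
    (hholder : HolderWith C r (deriv φ)) {F : AddCircle (2 * π) → ℂ} {lam : ℝ}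
    (hF : ∀ t : ℝ, F t = Complex.exp (Complex.I * lam * φ t)) {k : ℤ} {τ : ℝ}
    (hk : lam * deriv φ τ = k) (u : AddCircle (2 * π)) :
    ‖fourier (-k) u * F (u + τ) - Complex.exp (Complex.I * lam * φ τ)‖ ≤
      |lam| * (C * ‖u‖ ^ (1 + r : ℝ)) := by
  obtain ⟨x, rfl, hx⟩ := exists_coe_eq_and_abs_eq_norm u
  set ψ : ℝ := lam * (φ (x + τ) - φ τ - x * deriv φ τ) with hψ
  have hfactor : fourier (-k) (x : AddCircle (2 * π)) * F (x + τ) =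
      Complex.exp (Complex.I * lam * φ τ) * Complex.exp (Complex.I * ψ) := by
    rw [← AddCircle.coe_add, hF, fourier_coe_apply, ← Complex.exp_add, ← Complex.exp_add]
    congr 1
    rw [hψ, Int.cast_neg, ← Complex.ofReal_intCast, ← hk]
    push_cast
    field_simp
    ring
  have hunit : ‖Complex.exp (Complex.I * lam * φ τ)‖ = 1 := by
    rw [mul_assoc, ← Complex.ofReal_mul, Complex.norm_exp_I_mul_ofReal]
  have htaylor : |φ (x + τ) - φ τ - x * deriv φ τ| ≤ C * |x| ^ (1 + r : ℝ) := by
    simpa only [add_sub_cancel_right, Real.norm_eq_abs, smul_eq_mul] using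
      norm_sub_sub_smul_deriv_le_of_holderWith hφ hholder τ (x + τ)
  calc ‖fourier (-k) (x : AddCircle (2 * π)) * F (x + τ) - Complex.exp (Complex.I * lam * φ τ)‖
      = ‖Complex.exp (Complex.I * ψ) - 1‖ := by
        rw [hfactor, ← mul_sub_one, norm_mul, hunit, one_mul]
    _ ≤ |ψ| := Real.norm_exp_I_mul_ofReal_sub_one_le
    _ ≤ |lam| * (C * |x| ^ (1 + r : ℝ)) := by rw [hψ, abs_mul]; gcongr
    _ = |lam| * (C * ‖(x : AddCircle (2 * π))‖ ^ (1 + r : ℝ)) := by rw [hx]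

theorem fourierCoef_eq_fourierCoeff (F : AddCircle (2 * π) → ℂ) (k : ℤ) :
    fourierCoef (fun t ↦ F t) k = fourierCoeff F k := by
  rw [fourierCoeff_eq_intervalIntegral _ _ 0, zero_add, fourierCoef, Complex.real_smul]
  push_cast
  congr 1
  refine intervalIntegral.integral_congr fun t _ ↦ ?_
  simp only [fourier_coe_apply, smul_eq_mul, mul_comm (F t)]
  congr 2
  push_cast
  field_simp

theorem ApNorm_eq_tsum_fourierCoeff (p : ℝ) (F : AddCircle (2 * π) → ℂ) :
    ApNorm p (fun t ↦ F t) = (∑' k, ‖fourierCoeff F k‖ₑ ^ p) ^ (1 / p) := by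
  simp only [ApNorm, fourierCoef_eq_fourierCoeff, enorm_eq_nnnorm]

theorem uIcc_zero_deriv_subset_range_deriv {P : ℝ} (hper : Function.Periodic φ P) (hP : 0 < P)
    (hφ : Differentiable ℝ φ) (η : ℝ) : uIcc 0 (deriv φ η) ⊆ range (deriv φ) := by
  obtain ⟨ξ, -, hξ⟩ := exists_deriv_eq_zero hP hφ.continuous.continuousOn hper.eq.symm
  rw [← image_univ]
  exact (ordConnected_univ.image_deriv fun x _ ↦ hφ x).uIcc_subset
    ⟨ξ, mem_univ ξ, hξ⟩ (mem_image_of_mem _ (mem_univ η))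

theorem exists_finset_int_eq_mul_deriv {P : ℝ} (hper : Function.Periodic φ P) (hP : 0 < P)
    (hφ : Differentiable ℝ φ) (hne : ∃ s t, φ s ≠ φ t) :
    ∃ c > 0, ∀ lam : ℝ, ∃ S : Finset ℤ,
      (∀ k ∈ S, ∃ τ, lam * deriv φ τ = k) ∧ c * (1 + |lam|) ≤ S.card := by
  obtain ⟨η, hη⟩ : ∃ η, deriv φ η ≠ 0 := by
    by_contra! hzero
    obtain ⟨s, t, hst⟩ := hne
    exact hst (is_const_of_deriv_eq_zero hφ hzero s t)
  have hd : 0 < |deriv φ η| := abs_pos.2 hη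
  refine ⟨|deriv φ η| / (1 + |deriv φ η|), by positivity, fun lam ↦ ?_⟩
  obtain ⟨S, hS, hcard_one, hcard⟩ := exists_finset_int_subset_uIcc_zero (lam * deriv φ η)
  refine ⟨S, fun k hk ↦ ?_, ?_⟩
  · obtain ⟨v, hv, hvk⟩ : (k : ℝ) ∈ (lam * ·) '' uIcc 0 (deriv φ η) := by
      rw [image_const_mul_uIcc, mul_zero]
      exact hS k hk
    obtain ⟨τ, rfl⟩ := uIcc_zero_deriv_subset_range_deriv hper hP hφ η hv
    exact ⟨τ, hvk⟩
  · rw [abs_mul] at hcard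
    rw [div_mul_eq_mul_div, div_le_iff₀ (by positivity)]
    linarith [mul_le_mul_of_nonneg_left hcard_one hd.le]

theorem ofReal_card_rpow_mul_le_ApNorm {p δ lam : ℝ} (hp : 1 ≤ p)
    (hper : Function.Periodic φ (2 * π)) (hφ : Differentiable ℝ φ)
    (hholder : HolderWith C r (deriv φ)) (hδ : 0 < δ) (hδπ : δ ≤ π)
    (hsmall : |lam| * (C * δ ^ (1 + r : ℝ)) ≤ 1 / 2) {S : Finset ℤ}
    (hS : ∀ k ∈ S, ∃ τ, lam * deriv φ τ = k) :
    ENNReal.ofReal ((S.card : ℝ) ^ (1 / p) * (δ / (4 * π))) ≤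
      ApNorm p fun t ↦ Complex.exp (Complex.I * lam * φ t) := by
  have hp0 : 0 < p := zero_lt_one.trans_le hp
  set f : ℝ → ℂ := fun t ↦ Complex.exp (Complex.I * lam * φ t) with hf
  have hf_per : Function.Periodic f (2 * π) := fun t ↦ by simp only [hf, hper t]
  have hf_cont : Continuous f := by
    have := hφ.continuous
    fun_prop
  have hf_norm (t : ℝ) : ‖f t‖ = 1 := by
    simp only [hf, mul_assoc, ← Complex.ofReal_mul, Complex.norm_exp_I_mul_ofReal]
  set F : AddCircle (2 * π) → ℂ := hf_per.lift
  have hF : Integrable F AddCircle.haarAddCircle :=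
    (continuous_coinduced_dom.2 hf_cont : Continuous F).integrable_of_hasCompactSupport
      (.of_compactSpace F)
  have hlower : S.card * ENNReal.ofReal (δ / (2 * (2 * π))) ^ p ≤
      ∑' k, ‖fourierCoeff F k‖ₑ ^ p := by
    refine card_mul_rpow_le_tsum_fourierCoeff hF hδ (by linarith) hp fun k hk ↦ ?_
    obtain ⟨τ, hτ⟩ := hS k hk
    refine ⟨τ, f τ, hf_norm τ, fun u hu ↦ ?_⟩
    calc ‖(fourier (-k) u : ℂ) • F (u + τ) - f τ‖ ≤ |lam| * (C * ‖u‖ ^ (1 + r : ℝ)) :=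
          norm_fourier_neg_mul_exp_sub_le hφ hholder (fun _ ↦ rfl) hτ u
      _ ≤ |lam| * (C * δ ^ (1 + r : ℝ)) := by gcongr
      _ ≤ 1 / 2 := hsmall
  calc ENNReal.ofReal ((S.card : ℝ) ^ (1 / p) * (δ / (4 * π)))
      = (S.card * ENNReal.ofReal (δ / (2 * (2 * π))) ^ p) ^ (1 / p) := by
        rw [ENNReal.mul_rpow_of_nonneg _ _ (by positivity), one_div, ENNReal.rpow_rpow_inv hp0.ne',
          ENNReal.ofReal_mul (by positivity), ← ENNReal.ofReal_rpow_of_nonneg (by positivity)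
          (by positivity), ENNReal.ofReal_natCast]
        ring_nf
    _ ≤ (∑' k, ‖fourierCoeff F k‖ₑ ^ p) ^ (1 / p) := by gcongr
    _ = ApNorm p f := (ApNorm_eq_tsum_fourierCoeff p F).symm

theorem exists_forall_mul_rpow_le_half (K : ℝ≥0) {s : ℝ} (hs : 0 < s) :
    ∃ c, 0 < c ∧ c ≤ 1 ∧ ∀ L : ℝ, 0 ≤ L → L * (K * (c * (1 + L) ^ (-(1 / s))) ^ s) ≤ 1 / 2 := by
  refine ⟨(1 + 2 * K : ℝ) ^ (-(1 / s)), by positivity,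
    rpow_le_one_of_one_le_of_nonpos (by simp) (by simpa using hs.le), fun L hL ↦ ?_⟩
  have hpow : ((1 + 2 * K : ℝ) ^ (-(1 / s)) * (1 + L) ^ (-(1 / s))) ^ s =
      ((1 + 2 * K) * (1 + L))⁻¹ := by
    rw [← mul_rpow (by positivity) (by positivity), ← rpow_mul (by positivity), neg_mul,
      one_div_mul_cancel hs.ne', rpow_neg_one]
  rw [hpow, ← div_eq_mul_inv, ← mul_div_assoc, div_le_iff₀ (by positivity)]
  linarith [K.coe_nonneg]

end Phase

theorem statement2_general {φ : ℝ → ℝ} {C r : ℝ≥0} {p : ℝ} (hp : 1 ≤ p)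
    (hper : Function.Periodic φ (2 * π)) (hφ : Differentiable ℝ φ)
    (hholder : HolderWith C r (deriv φ)) (hne : ∃ s t, φ s ≠ φ t) :
    ∃ c : ℝ, 0 < c ∧ ∀ lam : ℝ, ENNReal.ofReal (c * (1 + |lam|) ^ (1 / p - 1 / (1 + r))) ≤
      ApNorm p fun t ↦ Complex.exp (Complex.I * lam * φ t) := by
  obtain ⟨a, ha, hfreq⟩ := exists_finset_int_eq_mul_deriv hper two_pi_pos hφ hne
  obtain ⟨b, hb, hb_one, hsmall⟩ := exists_forall_mul_rpow_le_half C (s := 1 + r) (by positivity)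
  refine ⟨a ^ (1 / p) * (b / (4 * π)), by positivity, fun lam ↦ ?_⟩
  obtain ⟨S, hS, hcard⟩ := hfreq lam
  set δ : ℝ := b * (1 + |lam|) ^ (-(1 / (1 + r : ℝ))) with hδ
  have hδ_one : δ ≤ 1 := mul_le_one₀ hb_one (by positivity)
    (rpow_le_one_of_one_le_of_nonpos (by simp) (neg_nonpos.2 (by positivity)))
  calc ENNReal.ofReal (a ^ (1 / p) * (b / (4 * π)) * (1 + |lam|) ^ (1 / p - 1 / (1 + r : ℝ)))
      = ENNReal.ofReal ((a * (1 + |lam|)) ^ (1 / p) * (δ / (4 * π))) := by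
        rw [hδ, mul_rpow ha.le (by positivity), sub_eq_add_neg, rpow_add (by positivity)]
        ring_nf
    _ ≤ ENNReal.ofReal ((S.card : ℝ) ^ (1 / p) * (δ / (4 * π))) := by gcongr
    _ ≤ _ := ofReal_card_rpow_mul_le_ApNorm hp hper hφ hholder (by positivity)
        (hδ_one.trans (by linarith [pi_gt_three])) (hsmall |lam| (abs_nonneg lam)) hS

/-- Corollary 1: if φ ∈ C^{1,α}(𝕋) is real, non-constant and 2π-periodic,
then for 1 ≤ p < 1+α one has ‖e^{iλφ}‖_{A_p} ≥ c_p·|λ|^{1/p − 1/(1+α)} for all λ ∈ ℝ. -/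
theorem statement2
    (α : ℝ) (hα0 : 0 < α) (hα1 : α ≤ 1)
    (φ : ℝ → ℝ)
    (hφ_per : ∀ t : ℝ, φ (t + 2 * Real.pi) = φ t)
    (hφ_C1 : ContDiff ℝ 1 φ)
    (hφ_lip : ∃ C : ℝ, 0 < C ∧ ∀ s t : ℝ, |deriv φ s - deriv φ t| ≤ C * |s - t| ^ α)
    (hφ_nonconst : ∃ s t : ℝ, φ s ≠ φ t)
    (p : ℝ) (hp1 : 1 ≤ p) (hp2 : p < 1 + α) :
    ∃ c : ℝ, 0 < c ∧ ∀ lam : ℝ,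
      ENNReal.ofReal (c * |lam| ^ (1 / p - 1 / (1 + α))) ≤
        ApNorm p (fun t => Complex.exp (Complex.I * (lam : ℂ) * (φ t : ℂ))) := by
  obtain ⟨C, hC, hlip⟩ := hφ_lip
  lift α to ℝ≥0 using hα0.le
  lift C to ℝ≥0 using hC.le
  obtain ⟨c, hc, hbound⟩ := statement2_general hp1 hφ_per (hφ_C1.differentiable one_ne_zero)
    (holderWith_of_dist_le hlip) hφ_nonconst
  refine ⟨c, hc, fun lam ↦ le_trans ?_ (hbound lam)⟩
  have hexp : 0 ≤ 1 / p - 1 / (1 + α : ℝ) :=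
    sub_nonneg.2 (one_div_le_one_div_of_le (by positivity) hp2.le)
  gcongr
  exact le_add_of_nonneg_left zero_le_one
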